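/- arXiv:2409.13680 — 4 statements merged into one kernel-verified Lean document; each statement's English description precedes it below -/
import Mathlib

section
/- Let a_1,...,a_s and b_1,...,b_s be positive real numbers. Then (1/2) * ( (Σ_{i=1}^s a_i^3 / b_i) * (Σ_{i=1}^s b_i^3 / a_i) - (Σ_{i=1}^s a_i b_i)^2 ) ≥ (Σ_{i=1}^s a_i^2) * (Σ_{i=1}^s b_i^2) - (Σ_{i=1}^s a_i b_i)^2 ≥ 0. -/
/-- The two-variable inequality behind the pairwise comparison, with `x = a d` and `y = b c`. -/
lemma two_mul_sq_add_sq_le {x y : ℝ} (hx : 0 < x) (hy : 0 < y) :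
    2 * (x ^ 2 + y ^ 2) ≤ x ^ 3 / y + y ^ 3 / x + 2 * (x * y) := by
  have key : x ^ 3 / y + y ^ 3 / x + 2 * (x * y) - 2 * (x ^ 2 + y ^ 2) =
      (x ^ 2 + y ^ 2) * (x - y) ^ 2 / (x * y) := by
    field_simp
    ring
  have : 0 ≤ (x ^ 2 + y ^ 2) * (x - y) ^ 2 / (x * y) := by positivity
  linarith

lemma two_mul_sum_sq_mul_sum_sq_le {ι : Type*} (t : Finset ι) (a b : ι → ℝ)
    (ha : ∀ i ∈ t, 0 < a i) (hb : ∀ i ∈ t, 0 < b i) :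
    2 * ((∑ i ∈ t, a i ^ 2) * ∑ i ∈ t, b i ^ 2) ≤
      (∑ i ∈ t, a i ^ 3 / b i) * (∑ i ∈ t, b i ^ 3 / a i) + (∑ i ∈ t, a i * b i) ^ 2 := by
  have pairwise_le : ∑ i ∈ t, ∑ j ∈ t, 2 * (a i ^ 2 * b j ^ 2 + b i ^ 2 * a j ^ 2) ≤
      ∑ i ∈ t, ∑ j ∈ t, (a i ^ 3 / b i * (b j ^ 3 / a j) + b i ^ 3 / a i * (a j ^ 3 / b j) +
        2 * (a i * b i * (a j * b j))) := by
    refine Finset.sum_le_sum fun i hi ↦ Finset.sum_le_sum fun j hj ↦ ?_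
    have h := two_mul_sq_add_sq_le (mul_pos (ha i hi) (hb j hj)) (mul_pos (hb i hi) (ha j hj))
    calc
      _ = 2 * ((a i * b j) ^ 2 + (b i * a j) ^ 2) := by ring
      _ ≤ _ := h
      _ = _ := by ring
  simp only [Finset.sum_add_distrib, ← Finset.mul_sum, ← Finset.sum_mul] at pairwise_le
  linarith

/-- If `a i` and `b i` (`i = 1, ..., s`) are positive real numbers, then
`(1/2) * ((∑ aᵢ³/bᵢ)(∑ bᵢ³/aᵢ) - (∑ aᵢbᵢ)²) ≥ (∑ aᵢ²)(∑ bᵢ²) - (∑ aᵢbᵢ)² ≥ 0`. -/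
theorem stmt0 (s : ℕ) (hs : 1 ≤ s) (a b : ℕ → ℝ)
    (ha : ∀ i ∈ Finset.Icc 1 s, 0 < a i) (hb : ∀ i ∈ Finset.Icc 1 s, 0 < b i) :
    (1 / 2 : ℝ) * ((∑ i ∈ Finset.Icc 1 s, (a i) ^ 3 / b i) *
        (∑ i ∈ Finset.Icc 1 s, (b i) ^ 3 / a i) - (∑ i ∈ Finset.Icc 1 s, a i * b i) ^ 2)
      ≥ (∑ i ∈ Finset.Icc 1 s, (a i) ^ 2) * (∑ i ∈ Finset.Icc 1 s, (b i) ^ 2) -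
        (∑ i ∈ Finset.Icc 1 s, a i * b i) ^ 2 ∧
    (∑ i ∈ Finset.Icc 1 s, (a i) ^ 2) * (∑ i ∈ Finset.Icc 1 s, (b i) ^ 2) -
        (∑ i ∈ Finset.Icc 1 s, a i * b i) ^ 2 ≥ 0 := by
  have h := two_mul_sum_sq_mul_sum_sq_le (Finset.Icc 1 s) a b ha hb
  have cauchy := Finset.sum_mul_sq_le_sq_mul_sq (Finset.Icc 1 s) a b
  constructor <;> linarith
end

section
/- Let G be a finite simple graph with n vertices and e edges, minimum degree δ ≥ 1, maximum degree Δ, and independence number β. Then Z₁(G) ≤ (n − β)·Δ² + e²/(2β) + β·Δ³/(2δ), with equality if and only if G is a regular balanced bipartite graph. -/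
open Finset

/-- The first Zagreb index of a graph: the sum of the squares of the vertex degrees. -/
def zagreb1 {V : Type*} [Fintype V] (G : SimpleGraph V) [DecidableRel G.Adj] : ℝ :=
  ∑ u, (G.degree u : ℝ) ^ 2

/-- The forgotten topological index of a graph: the sum of the cubes of the vertex degrees. -/
def forgottenIndex {V : Type*} [Fintype V] (G : SimpleGraph V) [DecidableRel G.Adj] : ℝ :=
  ∑ u, (G.degree u : ℝ) ^ 3

/-- The inverse degree of a graph: the sum of the reciprocals of the vertex degrees. -/
noncomputable def invDegree {V : Type*} [Fintype V] (G : SimpleGraph V) [DecidableRel G.Adj] : ℝ :=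
  ∑ u, 1 / (G.degree u : ℝ)

/-- The independence number of a graph: the largest cardinality of a set of pairwise
nonadjacent vertices. -/
noncomputable def indepNum {V : Type*} [Fintype V] (G : SimpleGraph V) : ℕ :=
  sSup {k | ∃ s : Finset V, s.card = k ∧ ∀ u ∈ s, ∀ v ∈ s, ¬ G.Adj u v}

/-- A graph is a regular balanced bipartite graph if its vertices can be partitioned into
two parts of equal size with every edge joining the two parts, and all vertices have the
same degree. -/
def IsRegularBalancedBipartite {V : Type*} [Fintype V] (G : SimpleGraph V) [DecidableRel G.Adj] : Prop :=
  ∃ (A : Finset V) (r : ℕ), 2 * A.card = Fintype.card V ∧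
    (∀ u v, G.Adj u v → (u ∈ A ↔ v ∉ A)) ∧ G.IsRegularOfDegree r

/-- A graph is `k`-connected if it has more than `k` vertices and removing any set of
fewer than `k` vertices leaves a connected graph. -/
def IsKConnected {V : Type*} [Fintype V] (G : SimpleGraph V) (k : ℕ) : Prop :=
  k < Fintype.card V ∧
    ∀ S : Finset V, S.card < k → (G.induce (↑S : Set V)ᶜ).Connected

/-- A graph is traceable if it has a Hamiltonian path. -/
def IsTraceable {V : Type*} [DecidableEq V] (G : SimpleGraph V) : Prop :=
  ∃ (u v : V) (p : G.Walk u v), p.IsHamiltonian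

/-- The independence number is attained by some independent set. -/
theorem exists_indep_card_eq_indepNum {V : Type*} [Fintype V] (G : SimpleGraph V) :
    ∃ s : Finset V, s.card = indepNum G ∧ ∀ u ∈ s, ∀ v ∈ s, ¬ G.Adj u v :=
  Nat.sSup_mem (s := {k | ∃ s : Finset V, s.card = k ∧ ∀ u ∈ s, ∀ v ∈ s, ¬ G.Adj u v})
    ⟨0, ∅, by simp⟩ ⟨Fintype.card V, by rintro k ⟨s, rfl, -⟩; exact s.card_le_univ⟩

/-- An independent set has at most `indepNum G` elements. -/
theorem card_le_indepNum {V : Type*} [Fintype V] (G : SimpleGraph V) (s : Finset V)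
    (hs : ∀ u ∈ s, ∀ v ∈ s, ¬ G.Adj u v) : s.card ≤ indepNum G :=
  le_csSup ⟨Fintype.card V, by rintro k ⟨s, rfl, -⟩; exact s.card_le_univ⟩ ⟨s, rfl, hs⟩

theorem card_filter_adj_le_degree {V : Type*} [Fintype V] (G : SimpleGraph V)
    [DecidableRel G.Adj] (s : Finset V) (v : V) :
    (s.filter fun u => G.Adj u v).card ≤ G.degree v := by
  rw [← G.card_neighborFinset_eq_degree]
  refine Finset.card_le_card fun u hu => ?_
  simpa [G.adj_comm] using (mem_filter.1 hu).2

section Counting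

variable {V : Type*} [Fintype V] [DecidableEq V] (G : SimpleGraph V) [DecidableRel G.Adj]

/-- Double counting of the edges leaving an independent set. -/
theorem sum_degree_indep_eq (s : Finset V) (hs : ∀ u ∈ s, ∀ v ∈ s, ¬ G.Adj u v) :
    ∑ u ∈ s, G.degree u = ∑ v ∈ sᶜ, (s.filter fun u => G.Adj u v).card := by
  refine Eq.trans (Finset.sum_congr rfl fun u hu => ?_)
    (Finset.sum_card_bipartiteAbove_eq_sum_card_bipartiteBelow G.Adj)
  rw [← G.card_neighborFinset_eq_degree]
  congr 1
  ext v
  simp only [SimpleGraph.mem_neighborFinset, Finset.bipartiteAbove, mem_filter, mem_compl]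
  exact ⟨fun h => ⟨fun hv => hs u hu v hv h, h⟩, And.right⟩

theorem sum_degree_add_sum_degree_compl (s : Finset V) :
    ∑ u ∈ s, G.degree u + ∑ u ∈ sᶜ, G.degree u = 2 * G.edgeFinset.card := by
  rw [Finset.sum_add_sum_compl, G.sum_degrees_eq_twice_card_edges]

/-- The degrees over an independent set sum to at most the number of edges. -/
theorem sum_degree_indep_le_card_edgeFinset (s : Finset V)
    (hs : ∀ u ∈ s, ∀ v ∈ s, ¬ G.Adj u v) :
    ∑ u ∈ s, G.degree u ≤ G.edgeFinset.card := by
  have h := sum_degree_indep_eq G s hs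
  have h' := Finset.sum_le_sum fun v (_ : v ∈ sᶜ) => card_filter_adj_le_degree G s v
  have := sum_degree_add_sum_degree_compl G s
  omega

/-- If the degrees over an independent set sum to the number of edges, then every edge joins
the set to its complement. -/
theorem mem_iff_notMem_of_sum_degree_eq (s : Finset V) (hs : ∀ u ∈ s, ∀ v ∈ s, ¬ G.Adj u v)
    (he : ∑ u ∈ s, G.degree u = G.edgeFinset.card) (u v : V) (huv : G.Adj u v) :
    u ∈ s ↔ v ∉ s := by
  refine ⟨fun hu hv => hs u hu v hv huv, fun hv => ?_⟩
  have hsum : ∑ v ∈ sᶜ, (s.filter fun u => G.Adj u v).card = ∑ v ∈ sᶜ, G.degree v := by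
    have h := sum_degree_indep_eq G s hs
    have := sum_degree_add_sum_degree_compl G s
    omega
  have hcard := (Finset.sum_eq_sum_iff_of_le
    fun v _ => card_filter_adj_le_degree G s v).1 hsum v (mem_compl.2 hv)
  have hsub : (s.filter fun u => G.Adj u v) ⊆ G.neighborFinset v := fun w hw => by
    simpa [G.adj_comm] using (mem_filter.1 hw).2
  have heq := Finset.eq_of_subset_of_card_le hsub
    (by rw [hcard, G.card_neighborFinset_eq_degree])
  have hu : u ∈ G.neighborFinset v := by simpa using huv.symm
  rw [← heq] at hu
  exact (mem_filter.1 hu).1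

/-- In a regular balanced bipartite graph of positive degree, each part is a maximum
independent set. -/
theorem two_mul_indepNum_eq_card (A : Finset V) (r : ℕ) (hr : 0 < r)
    (hA : 2 * A.card = Fintype.card V) (hbip : ∀ u v, G.Adj u v → (u ∈ A ↔ v ∉ A))
    (hreg : G.IsRegularOfDegree r) : 2 * indepNum G = Fintype.card V := by
  have hle := card_le_indepNum G A fun u hu v hv huv => (hbip u v huv).1 hu hv
  obtain ⟨s, hcard, hs⟩ := exists_indep_card_eq_indepNum G
  have h := sum_degree_indep_le_card_edgeFinset G s hs
  have h2 := G.sum_degrees_eq_twice_card_edges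
  simp only [hreg.degree_eq, sum_const, smul_eq_mul, card_univ, hcard] at h h2
  have : 2 * indepNum G ≤ Fintype.card V := by
    refine Nat.le_of_mul_le_mul_right (c := r) ?_ hr
    linarith
  omega

/-- The squared degrees outside `s` are bounded by `Δ²` and those inside by `Δ` times the
degree. -/
theorem zagreb1_le (s : Finset V) :
    zagreb1 G ≤ ((Fintype.card V : ℝ) - s.card) * (G.maxDegree : ℝ) ^ 2
      + (∑ u ∈ s, (G.degree u : ℝ)) * G.maxDegree := by
  have hΔ (u : V) : (G.degree u : ℝ) ≤ G.maxDegree := by exact_mod_cast G.degree_le_maxDegree u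
  have hin : ∑ u ∈ s, (G.degree u : ℝ) ^ 2 ≤ (∑ u ∈ s, (G.degree u : ℝ)) * G.maxDegree := by
    rw [Finset.sum_mul]
    refine Finset.sum_le_sum fun u _ => ?_
    rw [sq]
    exact mul_le_mul_of_nonneg_left (hΔ u) (Nat.cast_nonneg _)
  have hout : ∑ u ∈ sᶜ, (G.degree u : ℝ) ^ 2
      ≤ ((Fintype.card V : ℝ) - s.card) * (G.maxDegree : ℝ) ^ 2 := by
    refine (Finset.sum_le_card_nsmul _ _ ((G.maxDegree : ℝ) ^ 2) fun u _ => ?_).trans ?_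
    · exact pow_le_pow_left₀ (Nat.cast_nonneg _) (hΔ u) 2
    · rw [nsmul_eq_mul, Finset.card_compl, Nat.cast_sub s.card_le_univ]
  have := Finset.sum_add_sum_compl s fun u => (G.degree u : ℝ) ^ 2
  unfold zagreb1
  linarith

end Counting

theorem sq_div_add_cube_div_sub_mul {b d D e : ℝ} (hb : b ≠ 0) (hd : d ≠ 0) :
    e ^ 2 / (2 * b) + b * D ^ 3 / (2 * d) - e * D
      = (e - b * D) ^ 2 / (2 * b) + b * D ^ 2 * (D - d) / (2 * d) := by
  field_simp
  ring

/-- For a graph `G` with `n` vertices, `e` edges, minimum degree `δ ≥ 1`, maximum degree `Δ`,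
and independence number `β`: `Z₁(G) ≤ (n − β)Δ² + e²/(2β) + βΔ³/(2δ)`, with equality iff
`G` is a regular balanced bipartite graph. -/
theorem stmt1 {V : Type*} [Fintype V] [DecidableEq V] (G : SimpleGraph V) [DecidableRel G.Adj]
    (hδ : 1 ≤ G.minDegree) :
    zagreb1 G ≤ ((Fintype.card V : ℝ) - indepNum G) * (G.maxDegree : ℝ) ^ 2
        + (G.edgeFinset.card : ℝ) ^ 2 / (2 * indepNum G)
        + (indepNum G : ℝ) * (G.maxDegree : ℝ) ^ 3 / (2 * G.minDegree) ∧
    (zagreb1 G = ((Fintype.card V : ℝ) - indepNum G) * (G.maxDegree : ℝ) ^ 2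
        + (G.edgeFinset.card : ℝ) ^ 2 / (2 * indepNum G)
        + (indepNum G : ℝ) * (G.maxDegree : ℝ) ^ 3 / (2 * G.minDegree)
      ↔ IsRegularBalancedBipartite G) := by
  have : Nonempty V := by
    by_contra h
    rw [not_nonempty_iff] at h
    simp at hδ
  obtain ⟨s, hcard, hs⟩ := exists_indep_card_eq_indepNum G
  have hbpos : 0 < indepNum G := by
    obtain ⟨v⟩ := this
    exact card_le_indepNum G {v} (by simp)
  have hb : (0 : ℝ) < indepNum G := by exact_mod_cast hbpos
  have hd : (0 : ℝ) < G.minDegree := by exact_mod_cast hδ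
  have hdD : (G.minDegree : ℝ) ≤ G.maxDegree := by exact_mod_cast G.minDegree_le_maxDegree
  have hD : (0 : ℝ) < G.maxDegree := hd.trans_le hdD
  have hZ := zagreb1_le G s
  rw [hcard] at hZ
  have hS : ∑ u ∈ s, (G.degree u : ℝ) ≤ G.edgeFinset.card := by
    exact_mod_cast sum_degree_indep_le_card_edgeFinset G s hs
  have hSD := mul_le_mul_of_nonneg_right hS hD.le
  have hid := sq_div_add_cube_div_sub_mul (D := G.maxDegree) (e := G.edgeFinset.card) hb.ne' hd.ne'
  have hsq : (0 : ℝ) ≤ (G.edgeFinset.card - indepNum G * G.maxDegree : ℝ) ^ 2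
      / (2 * indepNum G) := by positivity
  have hgap : (0 : ℝ) ≤ indepNum G * (G.maxDegree : ℝ) ^ 2 * (G.maxDegree - G.minDegree)
      / (2 * G.minDegree) :=
    div_nonneg (mul_nonneg (by positivity) (sub_nonneg.2 hdD)) (by positivity)
  refine ⟨by linarith, fun heq => ?_, ?_⟩
  · have hsq0 : (G.edgeFinset.card - indepNum G * G.maxDegree : ℝ) ^ 2
        / (2 * indepNum G) = 0 := by linarith
    have hgap0 : indepNum G * (G.maxDegree : ℝ) ^ 2 * (G.maxDegree - G.minDegree)
        / (2 * G.minDegree) = 0 := by linarith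
    have hSe : ∑ u ∈ s, (G.degree u : ℝ) = G.edgeFinset.card :=
      mul_right_cancel₀ hD.ne' (by linarith)
    have he : (G.edgeFinset.card : ℝ) = indepNum G * G.maxDegree := by
      simpa [hb.ne', sub_eq_zero] using hsq0
    have hreg : G.maxDegree = G.minDegree := by
      have : (G.maxDegree : ℝ) - G.minDegree = 0 := by
        simpa [hb.ne', hd.ne', hD.ne'] using hgap0
      exact_mod_cast sub_eq_zero.1 this
    have hdeg : G.IsRegularOfDegree G.maxDegree := fun v =>
      le_antisymm (G.degree_le_maxDegree v) (hreg.le.trans (G.minDegree_le_degree v))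
    refine ⟨s, G.maxDegree, ?_, ?_, hdeg⟩
    · have h2 := G.sum_degrees_eq_twice_card_edges
      have he' : G.edgeFinset.card = indepNum G * G.maxDegree := by exact_mod_cast he
      simp only [hdeg.degree_eq, sum_const, smul_eq_mul, card_univ] at h2
      rw [hcard]
      refine Nat.eq_of_mul_eq_mul_right (m := G.maxDegree) (by exact_mod_cast hD) ?_
      linarith
    · exact mem_iff_notMem_of_sum_degree_eq G s hs (by exact_mod_cast hSe)
  · rintro ⟨A, r, hA, hbip, hreg⟩
    have hmax : G.maxDegree = r := hreg.maxDegree_eq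
    have hmin : G.minDegree = r := hreg.minDegree_eq
    rw [hmin] at hδ hd
    have hn := two_mul_indepNum_eq_card G A r hδ hA hbip hreg
    have h2 := G.sum_degrees_eq_twice_card_edges
    simp only [hreg.degree_eq, sum_const, smul_eq_mul, card_univ] at h2
    have he : G.edgeFinset.card = indepNum G * r := by
      rw [← hn] at h2
      linarith
    simp only [zagreb1, hreg.degree_eq, hmax, hmin, he, ← hn, sum_const, card_univ, nsmul_eq_mul]
    push_cast
    field_simp
    ring
end

section
/- Let G be a k-connected (k ≥ 2) finite simple graph with n ≥ 3 vertices, e edges, minimum degree δ, and maximum degree Δ. If Z₁(G) ≥ (n − k − 1)·Δ² + e²/(2(k + 1)) + (k + 1)·Δ³/(2δ), then G is Hamiltonian. -/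
open Finset

namespace SimpleGraph

variable {V : Type*} {G : SimpleGraph V}

/-- The list `l` lists the successive vertices of a walk from `a` to `b` in `G`. -/
def IsVertexList (G : SimpleGraph V) (a b : V) (l : List V) : Prop :=
  l.IsChain G.Adj ∧ l.head? = some a ∧ l.getLast? = some b

namespace IsVertexList

variable {a b c d : V} {l l' : List V}

lemma ne_nil (h : G.IsVertexList a b l) : l ≠ [] := by
  rintro rfl
  simpa using h.2.1

lemma append (h : G.IsVertexList a b l) (hbc : G.Adj b c) (h' : G.IsVertexList c d l') :
    G.IsVertexList a d (l ++ l') := by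
  refine ⟨List.isChain_append.2 ⟨h.1, h'.1, ?_⟩, ?_, ?_⟩
  · simp only [h.2.2, h'.2.1, Option.mem_def, Option.some.injEq]
    rintro _ rfl _ rfl
    exact hbc
  · simp [List.head?_append, h.2.1]
  · simp [List.getLast?_append, h'.2.2]

lemma reverse (h : G.IsVertexList a b l) : G.IsVertexList b a l.reverse := by
  refine ⟨List.isChain_reverse.2 (h.1.imp fun _ _ hab ↦ hab.symm), ?_, ?_⟩
  · simp [h.2.2]
  · simp [h.2.1]

lemma chain_iff (h : G.IsVertexList a b l) : (l : Cycle V).Chain G.Adj ↔ G.Adj b a := by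
  obtain ⟨hl, ha, hb⟩ := h
  cases l with
  | nil => simp at ha
  | cons x t =>
    obtain rfl : x = a := by simpa using ha
    rw [Cycle.chain_coe_cons, ← List.cons_append, List.isChain_append]
    simp [hl, hb]

end IsVertexList

lemma isVertexList_cons_concat {a b : V} {t : List V}
    (h : (b :: (t ++ [a])).IsChain G.Adj) : G.IsVertexList b a (b :: (t ++ [a])) :=
  ⟨h, by simp, by rw [← List.cons_append]; exact List.getLast?_concat⟩

lemma Walk.isVertexList_support {a b : V} (p : G.Walk a b) : G.IsVertexList a b p.support :=
  ⟨p.isChain_adj_support, by rw [List.head?_eq_some_head p.support_ne_nil]; simp,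
    by rw [List.getLast?_eq_some_getLast p.support_ne_nil]; simp⟩

lemma IsVertexList.of_induce {s : Set V} {a b : s} {l : List s}
    (h : (G.induce s).IsVertexList a b l) : G.IsVertexList a b (l.map Subtype.val) := by
  refine ⟨(List.isChain_map _).2 (h.1.imp fun _ _ hab ↦ by simpa using hab), ?_, ?_⟩
  · rw [List.head?_map, h.2.1, Option.map_some]
  · rw [List.getLast?_map, h.2.2, Option.map_some]

/-- A spanning cyclic sequence of distinct, consecutively adjacent vertices is a
Hamiltonian cycle. -/
lemma isHamiltonian_of_cycle [Fintype V] [DecidableEq V] (hV : 3 ≤ Fintype.card V)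
    {C : Cycle V} (hnd : C.Nodup) (hC : C.Chain G.Adj) (hlen : C.length = Fintype.card V) :
    G.IsHamiltonian := by
  intro _
  induction C using Quotient.inductionOn' with
  | h l =>
  cases l with
  | nil => simp only [Cycle.mk''_eq_coe, Cycle.length_coe, List.length_nil] at hlen; omega
  | cons a l =>
  simp only [Cycle.mk''_eq_coe, Cycle.nodup_coe_iff, Cycle.chain_coe_cons, Cycle.length_coe,
    List.length_cons] at hnd hC hlen
  obtain ⟨p, hs⟩ : ∃ p : G.Walk a a, p.support = a :: (l ++ [a]) :=
    ⟨(Walk.ofSupport _ (List.cons_ne_nil _ _) hC).copy (by simp) (by simp),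
      (Walk.support_copy _ _ _).trans (Walk.support_ofSupport _ _)⟩
  have hp : p.length = l.length + 1 := by
    simpa [Walk.length_support] using congrArg List.length hs
  refine ⟨a, p, Walk.isHamiltonianCycle_iff_isCycle_and_length_eq.2
    ⟨Walk.isCycle_iff_isPath_tail_and_le_length.2 ⟨?_, by omega⟩, by omega⟩⟩
  have hnil : ¬ p.Nil := by
    rw [← Walk.length_eq_zero_iff]; omega
  rw [Walk.isPath_def, Walk.support_tail_of_not_nil _ hnil, hs, List.tail_cons]
  grind

end SimpleGraph

namespace Cycle

variable {V : Type*} {C : Cycle V}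

lemma exists_eq_coe_append {a : V} (ha : a ∈ C) : ∃ l : List V, C = (l ++ [a] : List V) := by
  induction C using Quotient.inductionOn' with
  | h l =>
  obtain ⟨l₁, l₂, rfl⟩ := List.append_of_mem (show a ∈ l from ha)
  refine ⟨l₂ ++ l₁, ?_⟩
  rw [mk''_eq_coe, coe_eq_coe]
  simpa using (List.isRotated_append (l := l₁ ++ [a]) (l' := l₂))

variable [DecidableEq V]

lemma next_eq_of_eq_coe {a b : V} {t : List V} (hC : C = (b :: (t ++ [a]) : List V))
    (hs : C.Nodup) (ha : a ∈ C) : C.next hs a ha = b := by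
  subst hC
  rw [nodup_coe_iff] at hs
  refine List.next_cons_concat t a b ?_ ?_ (by simp) <;> grind

lemma exists_eq_coe_next (hs : C.Nodup) (hl : 2 ≤ C.length) {a : V} (ha : a ∈ C) :
    ∃ t : List V, C = (C.next hs a ha :: (t ++ [a]) : List V) := by
  obtain ⟨l, hC⟩ := exists_eq_coe_append ha
  cases l with
  | nil => rw [hC] at hl; simp at hl
  | cons b t =>
    rw [List.cons_append] at hC
    exact ⟨t, by rw [next_eq_of_eq_coe hC hs ha]; exact hC⟩

lemma next_injective (hs : C.Nodup) {a b : V} (ha : a ∈ C) (hb : b ∈ C)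
    (h : C.next hs a ha = C.next hs b hb) : a = b := by
  have h1 := C.prev_next hs a ha
  have h2 := C.prev_next hs b hb
  rw [← h1, ← h2]
  congr 1

end Cycle

namespace SimpleGraph

variable {V : Type*} {G : SimpleGraph V}

/-- The vertex `a` is adjacent to the component of `x` among the vertices avoiding `C`. -/
def IsAttached (G : SimpleGraph V) (C : Cycle V) (x : {v | v ∉ C}) (a : V) : Prop :=
  ∃ y : {v | v ∉ C}, (G.induce {v | v ∉ C}).Reachable x y ∧ G.Adj y a

section

variable {C : Cycle V} {x : {v | v ∉ C}} {a b : V}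

lemma IsAttached.exists_isVertexList (ha : G.IsAttached C x a) (hb : G.IsAttached C x b) :
    ∃ u w l, G.IsVertexList u w l ∧ l.Nodup ∧ (∀ v ∈ l, v ∉ C) ∧ G.Adj a u ∧ G.Adj w b := by
  classical
  obtain ⟨u, hu, hua⟩ := ha
  obtain ⟨w, hw, hwb⟩ := hb
  obtain ⟨p, hp⟩ := (hu.symm.trans hw).exists_isPath
  refine ⟨u, w, _, p.isVertexList_support.of_induce, ?_, ?_, hua.symm, hwb⟩
  · exact hp.support_nodup.map Subtype.val_injective
  · intro v hv
    obtain ⟨⟨v, hv'⟩, -, rfl⟩ := List.mem_map.1 hv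
    exact hv'

lemma two_le_length_of_chain (hC : C.Chain G.Adj) (ha : a ∈ C) : 2 ≤ C.length := by
  obtain ⟨l, rfl⟩ := Cycle.exists_eq_coe_append ha
  cases l with
  | nil => simp at hC
  | cons b t => simp

variable [DecidableEq V]

/-- In a longest cycle, the successor of an attached vertex is not attached. -/
lemma IsAttached.not_isAttached_next (hs : C.Nodup) (hC : C.Chain G.Adj)
    (hmax : ∀ D : Cycle V, D.Nodup → D.Chain G.Adj → D.length ≤ C.length)
    (ha : G.IsAttached C x a) (haC : a ∈ C) : ¬ G.IsAttached C x (C.next hs a haC) := by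
  intro hb
  obtain ⟨t, ht⟩ := Cycle.exists_eq_coe_next hs (two_le_length_of_chain hC haC) haC
  obtain ⟨u, w, l, hl, hnd, hlC, hau, hwb⟩ := ha.exists_isVertexList hb
  generalize C.next hs a haC = b at ht hb hwb
  subst ht
  rw [Cycle.nodup_coe_iff] at hs
  have hp : G.IsVertexList b a (b :: (t ++ [a])) := by
    refine isVertexList_cons_concat ?_
    rw [Cycle.chain_coe_cons, ← List.cons_append] at hC
    exact hC.left_of_append
  have hlen := hmax ((b :: (t ++ [a])) ++ l : List V)
    (Cycle.nodup_coe_iff.2 (List.nodup_append.2 ⟨hs, hnd, ?_⟩)) ((hp.append hau hl).chain_iff.2 hwb)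
  · have := List.length_pos_of_ne_nil hl.ne_nil
    simp only [Cycle.length_coe, List.length_append] at hlen
    omega
  · rintro v hv _ hw rfl
    exact hlC v hw hv

/-- In a longest cycle, the successors of two attached vertices are not adjacent. -/
lemma IsAttached.not_adj_next_next (hs : C.Nodup) (hC : C.Chain G.Adj)
    (hmax : ∀ D : Cycle V, D.Nodup → D.Chain G.Adj → D.length ≤ C.length)
    (ha : G.IsAttached C x a) (haC : a ∈ C) (hb : G.IsAttached C x b) (hbC : b ∈ C) :
    ¬ G.Adj (C.next hs a haC) (C.next hs b hbC) := by
  intro hadj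
  have hab : b ≠ a := by
    rintro rfl
    exact G.irrefl hadj
  obtain ⟨t, ht⟩ := Cycle.exists_eq_coe_next hs (two_le_length_of_chain hC haC) haC
  have hbt : b ∈ C.next hs a haC :: t := by
    have : b ∈ (C.next hs a haC :: (t ++ [a])) := by
      rw [ht] at hbC; exact hbC
    simp only [List.mem_cons, List.mem_append, List.not_mem_nil, or_false] at this ⊢
    tauto
  obtain ⟨P, Q, hPQ⟩ := List.append_of_mem hbt
  obtain ⟨u, w, l, hl, hnd, hlC, hbu, hwa⟩ := hb.exists_isVertexList ha
  obtain ⟨b', Q', hQ⟩ : ∃ b' Q', Q ++ [a] = b' :: Q' := by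
    cases Q <;> simp
  have hsplit : C.next hs a haC :: (t ++ [a]) = (P ++ [b]) ++ (b' :: Q') := by
    rw [← List.cons_append, hPQ, ← hQ]; simp
  have hnext : C.next hs b hbC = b' := by
    refine Cycle.next_eq_of_eq_coe (t := Q' ++ P) ?_ hs hbC
    rw [ht, hsplit, Cycle.coe_eq_coe]
    simpa using (List.isRotated_append (l := P ++ [b]) (l' := b' :: Q'))
  rw [hnext] at hadj
  have hCeq := ht.trans (congrArg _ hsplit)
  have hhead : (P ++ [b]).head? = some (C.next hs a haC) := by
    have := congrArg List.head? hPQ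
    cases P <;> simpa using this.symm
  have hlast : (b' :: Q').getLast? = some a := by rw [← hQ]; simp
  generalize C.next hs a haC = a' at *
  subst hCeq
  rw [Cycle.nodup_coe_iff] at hs
  have hch : (P ++ [b] ++ b' :: Q').IsChain G.Adj := by
    rw [← hsplit]
    rw [← hsplit, Cycle.chain_coe_cons, ← List.cons_append] at hC
    exact hC.left_of_append
  have hP : G.IsVertexList a' b (P ++ [b]) := ⟨hch.left_of_append, hhead, by simp⟩
  have hQ' : G.IsVertexList b' a (b' :: Q') := ⟨hch.right_of_append, by simp, hlast⟩
  have hlen := hmax (P ++ [b] ++ l ++ (b' :: Q').reverse : List V) (Cycle.nodup_coe_iff.2 ?_)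
    (((hP.append hbu hl).append hwa hQ'.reverse).chain_iff.2 hadj.symm)
  · have := List.length_pos_of_ne_nil hl.ne_nil
    simp only [Cycle.length_coe, List.length_append, List.length_reverse] at hlen
    omega
  · have hd : ∀ v ∈ l, v ∉ P ++ [b] ++ b' :: Q' := hlC
    simp only [List.nodup_append, List.mem_append, List.mem_reverse, List.nodup_reverse] at hs hd ⊢
    grind

end

lemma exists_longest_cycle [Fintype V] (G : SimpleGraph V) : ∃ C : Cycle V, C.Nodup ∧
    C.Chain G.Adj ∧ ∀ D : Cycle V, D.Nodup → D.Chain G.Adj → D.length ≤ C.length := by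
  have hbdd : ∀ D : Cycle V, D.Nodup → D.length ≤ Fintype.card V := by
    intro D hD
    induction D using Quotient.inductionOn' with
    | h l => exact List.Nodup.length_le_card hD
  let p : ℕ → Prop := fun n ↦ ∃ D : Cycle V, D.Nodup ∧ D.Chain G.Adj ∧ D.length = n
  classical
  have h0 : p 0 := ⟨Cycle.nil, by simp, by simp, by simp⟩
  obtain ⟨C, hs, hC, hlen⟩ := Nat.findGreatest_spec (P := p) (Nat.zero_le (Fintype.card V)) h0
  refine ⟨C, hs, hC, fun D hD hD' ↦ ?_⟩
  rw [hlen]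
  exact Nat.le_findGreatest (hbdd D hD) ⟨D, hD, hD', rfl⟩

end SimpleGraph

/-- The **Chvátal–Erdős theorem**: a `k`-connected graph which is not Hamiltonian has an
independent set of size `k + 1`. -/
theorem IsKConnected.exists_indep_of_not_isHamiltonian {V : Type*} [Fintype V] [DecidableEq V]
    {G : SimpleGraph V} {k : ℕ} (hk : 2 ≤ k) (hconn : IsKConnected G k)
    (hG : ¬ G.IsHamiltonian) :
    ∃ I : Finset V, I.card = k + 1 ∧ ∀ u ∈ I, ∀ v ∈ I, ¬ G.Adj u v := by
  classical
  obtain ⟨C, hs, hC, hmax⟩ := G.exists_longest_cycle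
  have hcard := hconn.1
  obtain ⟨x, hx⟩ : ∃ x, x ∉ C := by
    by_contra! hall
    refine hG (SimpleGraph.isHamiltonian_of_cycle (by omega) hs hC ?_)
    rw [← Finset.card_univ, ← Cycle.card_toMultiset]
    have hfin : C.toFinset = Finset.univ := by
      ext v
      induction C using Quotient.inductionOn' with
      | h l => simpa using hall v
    induction C using Quotient.inductionOn' with
    | h l =>
      rw [← hfin]
      simpa using (List.toFinset_card_of_nodup hs).symm
  -- an edge of `G`, as a cyclic sequence of length two, shows that `C` is nonempty
  obtain ⟨c, hc⟩ : ∃ c, c ∈ C := by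
    have hpre : (G.induce ((∅ : Finset V) : Set V)ᶜ).Connected := hconn.2 ∅ (by simp; omega)
    obtain ⟨z, hz⟩ := Fintype.exists_ne_of_one_lt_card (by omega : 1 < Fintype.card V) x
    obtain ⟨p⟩ := hpre.preconnected ⟨x, by simp⟩ ⟨z, by simp⟩
    have hadj : ∃ y, G.Adj x y := by
      cases p with
      | nil => exact absurd rfl hz
      | cons h _ => exact ⟨_, h⟩
    obtain ⟨y, hy⟩ := hadj
    have := hmax ([x, y] : List V) (by simpa using hy.ne) (by
      simp [Cycle.chain_coe_cons, hy, hy.symm])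
    induction C using Quotient.inductionOn' with
    | h l =>
      cases l with
      | nil => simp at this
      | cons c l => exact ⟨c, by simp⟩
  let x' : {v | v ∉ C} := ⟨x, hx⟩
  let N : Finset V := Finset.univ.filter fun a ↦ a ∈ C ∧ G.IsAttached C x' a
  have hN : ∀ a ∈ N, a ∈ C ∧ G.IsAttached C x' a := fun a ha ↦ (Finset.mem_filter.1 ha).2
  let f : N → V := fun a ↦ C.next hs a (hN a a.2).1
  have hf : Function.Injective f := fun a b h ↦ Subtype.ext (Cycle.next_injective hs _ _ h)
  have hfN : ∀ a, ¬ G.IsAttached C x' (f a) := fun a ↦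
    (hN a a.2).2.not_isAttached_next hs hC hmax (hN a a.2).1
  have hfC : ∀ a, f a ∈ C := fun a ↦ C.next_mem hs _ _
  have hkN : k ≤ N.card := by
    by_contra! hlt
    obtain ⟨d, hdC, hdN⟩ : ∃ d ∈ C, d ∉ N := by
      by_cases hcN : c ∈ N
      · exact ⟨f ⟨c, hcN⟩, hfC _, fun h ↦ hfN ⟨c, hcN⟩ (hN _ h).2⟩
      · exact ⟨c, hc, hcN⟩
    have key : ∀ u v : ((N : Set V)ᶜ : Set V), (G.induce (N : Set V)ᶜ).Walk u v →
        (∃ hu : (u : V) ∉ C, (G.induce {v | v ∉ C}).Reachable x' ⟨u, hu⟩) → (v : V) ∉ C := by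
      intro u v p
      induction p with
      | nil => exact fun h ↦ h.1
      | @cons u w v h p ih =>
        rintro ⟨hu, hreach⟩
        have hadj : G.Adj u w := h
        have hatt : G.IsAttached C x' w := ⟨⟨u, hu⟩, hreach, hadj⟩
        have hw : (w : V) ∉ C := fun hwC ↦ w.2 (by simp [N, hwC, hatt])
        exact ih ⟨hw, hreach.trans (SimpleGraph.Adj.reachable (by exact hadj))⟩
    obtain ⟨p⟩ := (hconn.2 N hlt).preconnected
      ⟨x, fun h ↦ hx (hN x h).1⟩ ⟨d, by simpa using hdN⟩
    exact key _ _ p ⟨hx, SimpleGraph.Reachable.rfl⟩ hdC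
  let J : Finset V := insert x (Finset.univ.image f)
  have hJ : k + 1 ≤ J.card := by
    rw [Finset.card_insert_of_notMem, Finset.card_image_of_injective _ hf]
    · simpa using hkN
    · simp only [Finset.mem_image, Finset.mem_univ, true_and, not_exists]
      exact fun a h ↦ hx (h ▸ hfC a)
  obtain ⟨I, hIJ, hI⟩ := Finset.exists_subset_card_eq hJ
  have hxf : ∀ a, ¬ G.Adj x (f a) := fun a h ↦ hfN a ⟨x', SimpleGraph.Reachable.rfl, h⟩
  refine ⟨I, hI, fun u hu v hv ↦ ?_⟩
  have hu' := hIJ hu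
  have hv' := hIJ hv
  simp only [J, Finset.mem_insert, Finset.mem_image, Finset.mem_univ, true_and] at hu' hv'
  rcases hu' with rfl | ⟨a, rfl⟩ <;> rcases hv' with rfl | ⟨b, rfl⟩
  · exact G.irrefl
  · exact hxf b
  · exact fun h ↦ hxf a h.symm
  · exact (hN a a.2).2.not_adj_next_next hs hC hmax (hN a a.2).1 (hN b b.2).2 (hN b b.2).1

lemma IsKConnected.le_minDegree {V : Type*} [Fintype V] [DecidableEq V] {G : SimpleGraph V}
    [DecidableRel G.Adj] {k : ℕ} (hconn : IsKConnected G k) : k ≤ G.minDegree := by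
  have hcard := hconn.1
  have : Nonempty V := Fintype.card_pos_iff.1 (by omega)
  refine G.le_minDegree_of_forall_le_degree k fun v ↦ ?_
  by_contra! hlt
  obtain ⟨z, hz⟩ : ∃ z, z ∉ insert v (G.neighborFinset v) := by
    by_contra! hall
    have h := Finset.card_insert_le v (G.neighborFinset v)
    rw [Finset.eq_univ_iff_forall.2 hall, Finset.card_univ, G.card_neighborFinset_eq_degree] at h
    omega
  simp only [Finset.mem_insert, SimpleGraph.mem_neighborFinset, not_or] at hz
  obtain ⟨p⟩ := (hconn.2 (G.neighborFinset v) hlt).preconnected ⟨v, by simp⟩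
    ⟨z, by simpa using hz.2⟩
  cases p with
  | nil => exact hz.1 rfl
  | @cons _ w _ h _ =>
    have hw := w.2
    have hadj : G.Adj v w := h
    simp [hadj] at hw

namespace SimpleGraph

variable {V : Type*} [Fintype V] [DecidableEq V] {G : SimpleGraph V}

lemma sum_card_neighborFinset_inter_compl [DecidableRel G.Adj] {I : Finset V}
    (hI : ∀ u ∈ I, ∀ v ∈ I, ¬ G.Adj u v) :
    ∑ b ∈ Iᶜ, #(G.neighborFinset b ∩ I) = ∑ a ∈ I, G.degree a := by
  have h := Finset.sum_card_bipartiteAbove_eq_sum_card_bipartiteBelow (s := Iᶜ) (t := I) G.Adj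
  convert h using 2 with b _ a ha
  · congr 1
    ext v
    simp [Finset.mem_bipartiteAbove, and_comm]
  · rw [← G.card_neighborFinset_eq_degree]
    congr 1
    ext v
    simp only [mem_neighborFinset, Finset.mem_bipartiteBelow, Finset.mem_compl, G.adj_comm a v]
    exact ⟨fun h ↦ ⟨fun hv ↦ hI v hv a ha h, h⟩, fun h ↦ h.2⟩

/-- A balanced complete bipartite graph with parts of size at least three, possibly with a
perfect matching removed, is Hamiltonian. -/
lemma isHamiltonian_of_adj_of_ne {m : ℕ} (hm : 3 ≤ m) (hV : Fintype.card V = 2 * m)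
    {a b : ZMod m → V} (ha : a.Injective) (hb : b.Injective) (hab : ∀ i j, a i ≠ b j)
    (hadj : ∀ i j, i ≠ j → G.Adj (a i) (b j)) : G.IsHamiltonian := by
  have : NeZero m := ⟨by omega⟩
  have hnat : ∀ n : ℕ, 0 < n → n < m → (n : ZMod m) ≠ 0 := fun n h0 hn h ↦
    (Nat.le_of_dvd h0 ((ZMod.natCast_eq_zero_iff n m).1 h)).not_gt hn
  have h1 : (1 : ZMod m) ≠ 0 := by simpa using hnat 1 (by omega) (by omega)
  have h2 : (2 : ZMod m) ≠ 0 := by simpa using hnat 2 (by omega) (by omega)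
  let f : ℕ → V := fun j ↦ if Even j then a (j / 2 : ℕ) else b ((j / 2 : ℕ) + 2)
  have hfe : ∀ i, f (2 * i) = a i := fun i ↦ by simp [f]
  have hfo : ∀ i, f (2 * i + 1) = b (i + 2) := fun i ↦ by
    simp [f, show (2 * i + 1) / 2 = i by omega]
  have hf : ∀ j, G.Adj (f j) (f (j + 1)) := by
    intro j
    obtain ⟨i, rfl | rfl⟩ := Nat.even_or_odd' j
    · rw [hfe, hfo]
      exact hadj _ _ (by simpa using h2)
    · rw [hfo, show 2 * i + 1 + 1 = 2 * (i + 1) by ring, hfe]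
      refine (hadj _ _ ?_).symm
      push_cast
      intro h
      apply h1
      linear_combination -h
  have hper : f (2 * m) = f 0 := by
    rw [hfe, show (0 : ℕ) = 2 * 0 from rfl, hfe]; simp
  have hcast : ∀ i j : ℕ, i < m → j < m → (i : ZMod m) = j → i = j := fun i j hi hj h ↦ by
    rw [ZMod.natCast_eq_natCast_iff'] at h
    rwa [Nat.mod_eq_of_lt hi, Nat.mod_eq_of_lt hj] at h
  have hinj : ∀ i ∈ List.range (2 * m), ∀ j ∈ List.range (2 * m), f i = f j → i = j := by
    intro i hi j hj h
    rw [List.mem_range] at hi hj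
    obtain ⟨i, rfl | rfl⟩ := Nat.even_or_odd' i <;> obtain ⟨j, rfl | rfl⟩ := Nat.even_or_odd' j
    · rw [hfe, hfe] at h
      rw [hcast i j (by omega) (by omega) (ha h)]
    · rw [hfe, hfo] at h
      exact absurd h (hab _ _)
    · rw [hfe, hfo] at h
      exact absurd h.symm (hab _ _)
    · rw [hfo, hfo] at h
      rw [hcast i j (by omega) (by omega) (add_right_cancel (hb h))]
  obtain ⟨n, hn⟩ : ∃ n, 2 * m = n + 1 := ⟨2 * m - 1, by omega⟩
  refine isHamiltonian_of_cycle (C := ((List.range (2 * m)).map f : List V)) (by omega) ?_ ?_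
    (by simp [hV])
  · exact Cycle.nodup_coe_iff.2 (List.nodup_range.map_on hinj)
  · rw [← Cycle.map_coe, Cycle.chain_map, hn, Cycle.chain_range_succ]
    refine ⟨?_, fun j _ ↦ hf j⟩
    rw [← hper, hn]
    exact hf n

/-- A regular graph of degree at least `m - 1` on `2 * m` vertices, half of which form an
independent set, is Hamiltonian. -/
lemma IsRegularOfDegree.isHamiltonian_of_indep [DecidableRel G.Adj] {m r : ℕ} (hm : 3 ≤ m)
    (hV : Fintype.card V = 2 * m) (hr : G.IsRegularOfDegree r) (hmr : m ≤ r + 1)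
    {I : Finset V} (hIm : #I = m) (hI : ∀ u ∈ I, ∀ v ∈ I, ¬ G.Adj u v) : G.IsHamiltonian := by
  have hcompl : #Iᶜ = m := by rw [Finset.card_compl]; omega
  have hsub : ∀ a ∈ I, G.neighborFinset a ⊆ Iᶜ := fun a ha v hv ↦
    Finset.mem_compl.2 fun hvI ↦ hI a ha v hvI (by simpa using hv)
  have hdeg : ∀ v, #(G.neighborFinset v) = r := fun v ↦
    (G.card_neighborFinset_eq_degree v).trans (hr v)
  have hnon : ∀ a ∈ I, #(Iᶜ \ G.neighborFinset a) = m - r := fun a ha ↦ by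
    rw [Finset.card_sdiff_of_subset (hsub a ha), hcompl, hdeg]
  have hBI : ∀ b ∈ Iᶜ, #(G.neighborFinset b ∩ I) = r := by
    refine (Finset.sum_eq_sum_iff_of_le fun b _ ↦ ?_).1 ?_
    · exact (Finset.card_le_card Finset.inter_subset_left).trans (hdeg b).le
    · rw [sum_card_neighborFinset_inter_compl hI, Finset.sum_congr rfl fun a _ ↦ hr a,
        Finset.sum_const, Finset.sum_const, hIm, hcompl]
  obtain ⟨e, he⟩ : ∃ e : I ≃ (Iᶜ : Finset V), ∀ a b, b ≠ e a → G.Adj a b := by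
    rcases (show m - r = 0 ∨ m = r + 1 by omega) with h | h
    · refine ⟨Fintype.equivOfCardEq (by simp only [Fintype.card_coe]; omega), fun a b _ ↦ ?_⟩
      have := hnon a a.2
      rw [h, Finset.card_eq_zero, Finset.sdiff_eq_empty_iff_subset] at this
      simpa using this b.2
    · have hex : ∀ a : I, ∃ b, Iᶜ \ G.neighborFinset a = {b} := fun a ↦
        Finset.card_eq_one.1 ((hnon a a.2).trans (by omega))
      choose g hg using hex
      have hgmem : ∀ a, g a ∈ Iᶜ ∧ ¬ G.Adj a (g a) := fun a ↦ by
        have := (hg a).symm ▸ Finset.mem_singleton_self (g a)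
        rwa [Finset.mem_sdiff, mem_neighborFinset] at this
      have hginj : Function.Injective g := by
        intro a a' haa
        by_contra hne
        have hle : #(G.neighborFinset (g a) ∩ I) ≤ #((I.erase a).erase a') := by
          refine Finset.card_le_card fun v hv ↦ ?_
          rw [Finset.mem_inter, mem_neighborFinset] at hv
          refine Finset.mem_erase.2 ⟨?_, Finset.mem_erase.2 ⟨?_, hv.2⟩⟩
          · rintro rfl
            exact (hgmem a').2 (haa ▸ hv.1.symm)
          · rintro rfl
            exact (hgmem a).2 hv.1.symm
        rw [hBI _ (hgmem a).1, Finset.card_erase_of_mem, Finset.card_erase_of_mem a.2, hIm] at hle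
        · omega
        · exact Finset.mem_erase.2 ⟨fun h ↦ hne (Subtype.ext h.symm), a'.2⟩
      let g' : I → (Iᶜ : Finset V) := fun a ↦ ⟨g a, (hgmem a).1⟩
      have hbij : g'.Bijective := (Fintype.bijective_iff_injective_and_card g').2
        ⟨fun a a' h ↦ hginj (congrArg Subtype.val h), by simp only [Fintype.card_coe]; omega⟩
      refine ⟨Equiv.ofBijective g' hbij, fun a b hb ↦ ?_⟩
      by_contra hadj
      have : (b : V) ∈ Iᶜ \ G.neighborFinset a := by simp [hadj]
      rw [hg a, Finset.mem_singleton] at this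
      exact hb (Subtype.ext this)
  have : NeZero m := ⟨by omega⟩
  let a : ZMod m ≃ I := Fintype.equivOfCardEq (by rw [ZMod.card, Fintype.card_coe, hIm])
  refine isHamiltonian_of_adj_of_ne (a := fun i ↦ a i) (b := fun i ↦ e (a i)) hm hV
    (Subtype.val_injective.comp a.injective)
    (Subtype.val_injective.comp (e.injective.comp a.injective)) ?_ ?_
  · intro i j h
    exact Finset.mem_compl.1 (e (a j)).2 (h ▸ (a i).2)
  · intro i j hij
    exact he _ _ fun h ↦ hij (a.injective (e.injective h)).symm

end SimpleGraph

/-- If `G` is a `k`-connected (`k ≥ 2`) graph with `n ≥ 3` vertices, `e` edges, minimum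
degree `δ`, and maximum degree `Δ`, and `Z₁(G) ≥ (n − k − 1)Δ² + e²/(2(k+1)) + (k+1)Δ³/(2δ)`,
then `G` is Hamiltonian. -/
theorem stmt6 {V : Type*} [Fintype V] [DecidableEq V] (G : SimpleGraph V) [DecidableRel G.Adj]
    (k : ℕ) (hk : 2 ≤ k) (hconn : IsKConnected G k) (hn : 3 ≤ Fintype.card V)
    (h : zagreb1 G ≥ ((Fintype.card V : ℝ) - k - 1) * (G.maxDegree : ℝ) ^ 2
        + (G.edgeFinset.card : ℝ) ^ 2 / (2 * ((k : ℝ) + 1))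
        + ((k : ℝ) + 1) * (G.maxDegree : ℝ) ^ 3 / (2 * G.minDegree)) :
    G.IsHamiltonian := by
  by_contra hG
  obtain ⟨I, hIk, hI⟩ := hconn.exists_indep_of_not_isHamiltonian hk hG
  have hkδ := hconn.le_minDegree
  have hsum := SimpleGraph.sum_card_neighborFinset_inter_compl hI
  have hhand := G.sum_degrees_eq_twice_card_edges
  have hsplit := Finset.sum_add_sum_compl I fun v ↦ G.degree v
  have hse : ∑ a ∈ I, G.degree a ≤ #G.edgeFinset := by
    have : ∑ b ∈ Iᶜ, #(G.neighborFinset b ∩ I) ≤ ∑ b ∈ Iᶜ, G.degree b :=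
      Finset.sum_le_sum fun b _ ↦ Finset.card_le_card Finset.inter_subset_left
    omega
  have hcompl : (#Iᶜ : ℝ) = (Fintype.card V : ℝ) - k - 1 := by
    rw [Finset.card_compl, Nat.cast_sub (Finset.card_le_univ I), hIk]
    push_cast
    ring
  have hδΔ : (G.minDegree : ℝ) ≤ G.maxDegree := by exact_mod_cast G.minDegree_le_maxDegree
  have hδ : (0 : ℝ) < G.minDegree := by exact_mod_cast (by omega : 0 < G.minDegree)
  have hZI : ∑ a ∈ I, (G.degree a : ℝ) ^ 2 ≤ G.maxDegree * #G.edgeFinset := by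
    calc ∑ a ∈ I, (G.degree a : ℝ) ^ 2 ≤ ∑ a ∈ I, (G.maxDegree : ℝ) * G.degree a := by
          refine Finset.sum_le_sum fun a _ ↦ ?_
          rw [sq]
          gcongr
          exact G.degree_le_maxDegree a
      _ = G.maxDegree * ((∑ a ∈ I, G.degree a : ℕ) : ℝ) := by
          rw [← Finset.mul_sum]; push_cast; rfl
      _ ≤ G.maxDegree * #G.edgeFinset := by gcongr
  have hZc : ∑ b ∈ Iᶜ, (G.degree b : ℝ) ^ 2 ≤
      ((Fintype.card V : ℝ) - k - 1) * (G.maxDegree : ℝ) ^ 2 := by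
    rw [← hcompl, ← nsmul_eq_mul]
    refine Finset.sum_le_card_nsmul _ _ _ fun b _ ↦ ?_
    gcongr
    exact G.degree_le_maxDegree b
  rw [zagreb1, ← Finset.sum_add_sum_compl I] at h
  generalize hE : (#G.edgeFinset : ℝ) = e at h hZI
  generalize hD : (G.maxDegree : ℝ) = D at h hZI hZc hδΔ
  generalize hd : (G.minDegree : ℝ) = d at h hδΔ hδ
  have hm : (0 : ℝ) < (k : ℝ) + 1 := by positivity
  have hcube : ((k : ℝ) + 1) * D ^ 3 / (2 * d) =
      ((k : ℝ) + 1) * D ^ 2 / 2 + ((k : ℝ) + 1) * D ^ 2 * (D - d) / (2 * d) := by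
    field_simp
    ring
  have hsquare : e ^ 2 / (2 * ((k : ℝ) + 1)) + ((k : ℝ) + 1) * D ^ 2 / 2 =
      D * e + (e - ((k : ℝ) + 1) * D) ^ 2 / (2 * ((k : ℝ) + 1)) := by
    field_simp
    ring
  have hterm1 : 0 ≤ ((k : ℝ) + 1) * D ^ 2 * (D - d) / (2 * d) := by
    have := sub_nonneg.2 hδΔ
    positivity
  have hterm2 : 0 ≤ (e - ((k : ℝ) + 1) * D) ^ 2 / (2 * ((k : ℝ) + 1)) := by positivity
  have hDd : D = d := by
    have h0 : ((k : ℝ) + 1) * D ^ 2 * (D - d) / (2 * d) = 0 := by linarith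
    have hDpos : 0 < D := hδ.trans_le hδΔ
    have : ((k : ℝ) + 1) * D ^ 2 ≠ 0 := by positivity
    have h2d : 2 * d ≠ 0 := by positivity
    rw [div_eq_zero_iff, or_iff_left h2d, mul_eq_zero, or_iff_right this] at h0
    linarith
  have heD : e = ((k : ℝ) + 1) * D := by
    have h0 : (e - ((k : ℝ) + 1) * D) ^ 2 / (2 * ((k : ℝ) + 1)) = 0 := by linarith
    have h2m : 2 * ((k : ℝ) + 1) ≠ 0 := by positivity
    rw [div_eq_zero_iff, or_iff_left h2m, sq_eq_zero_iff] at h0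
    linarith
  have hΔδ : G.maxDegree = G.minDegree := by
    rw [← hD, ← hd] at hDd
    exact_mod_cast hDd
  have heN : #G.edgeFinset = (k + 1) * G.maxDegree := by
    rw [← hE, ← hD] at heD
    exact_mod_cast heD
  have hreg : G.IsRegularOfDegree G.maxDegree := fun v ↦
    le_antisymm (G.degree_le_maxDegree v) (hΔδ ▸ G.minDegree_le_degree v)
  have hV : Fintype.card V = 2 * (k + 1) := by
    rw [Finset.sum_congr rfl fun v _ ↦ hreg v, Finset.sum_const, Finset.card_univ, smul_eq_mul,
      heN, ← mul_assoc] at hhand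
    exact Nat.eq_of_mul_eq_mul_right (by omega) hhand
  exact hG (hreg.isHamiltonian_of_indep (by omega) hV (by omega) hIk hI)
end

section
/- Let G be a k-connected (k ≥ 2) finite simple graph with n ≥ 3 vertices, e edges, minimum degree δ, and maximum degree Δ. If F(G) ≤ (n − k − 1)·δ³ + (δ/(k + 1))·( 2(k + 1)·((k + 1)·δ² + e²/(n − k − 1)) − e² − 2(k + 1)·(n − k − 1)·Δ² ), then G is Hamiltonian. -/
open Finset

namespace SimpleGraph

variable {V : Type*} {G : SimpleGraph V}

/-- An `m`-periodic sequence of vertices running around a cycle of length `m` in `G`. -/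
structure IsCyclicSeq (G : SimpleGraph V) (m : ℕ) (c : ℕ → V) : Prop where
  three_le : 3 ≤ m
  periodic : Function.Periodic c m
  injOn : Set.InjOn c (Set.Iio m)
  adj : ∀ i, G.Adj (c i) (c (i + 1))

lemma IsCyclicSeq.of_injOn {m : ℕ} {f : ℕ → V} (hm : 3 ≤ m) (hinj : Set.InjOn f (Set.Iio m))
    (hadj : ∀ i, i + 1 < m → G.Adj (f i) (f (i + 1))) (hclose : G.Adj (f (m - 1)) (f 0)) :
    G.IsCyclicSeq m fun i ↦ f (i % m) where
  three_le := hm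
  periodic i := by simp
  injOn i hi j hj hij := by
    simp only [Set.mem_Iio] at hi hj
    simp only [Nat.mod_eq_of_lt hi, Nat.mod_eq_of_lt hj] at hij
    exact hinj hi hj hij
  adj i := by
    have hlt := Nat.mod_lt i (by lia : 0 < m)
    rcases Nat.lt_or_ge (i % m + 1) m with h | h
    · have : (i + 1) % m = i % m + 1 := by
        rw [Nat.add_mod, Nat.mod_eq_of_lt (by lia : 1 < m), Nat.mod_eq_of_lt h]
      simpa only [this] using hadj _ h
    · have h1 : i % m = m - 1 := by lia
      have : (i + 1) % m = 0 := by
        rw [Nat.add_mod, h1, Nat.mod_eq_of_lt (by lia : 1 < m), Nat.sub_add_cancel (by lia)]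
        simp
      simpa only [this, h1] using hclose

lemma exists_isCyclicSeq_of_list {l : List V} (hlen : 3 ≤ l.length) (hnd : l.Nodup)
    (hchain : l.IsChain G.Adj) (hclose : ∀ x ∈ l.getLast?, ∀ y ∈ l.head?, G.Adj x y) :
    ∃ c, G.IsCyclicSeq l.length c := by
  have hget (i : ℕ) (hi : i < l.length) : l.getD i (l[0]) = l[i] := by simp [hi]
  refine ⟨_, IsCyclicSeq.of_injOn (f := fun i ↦ l.getD i (l[0])) hlen ?_ ?_ ?_⟩
  · intro i hi j hj hij
    simp only [hget i hi, hget j hj] at hij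
    exact (hnd.getElem_inj_iff).1 hij
  · intro i hi
    rw [hget i (by lia), hget _ hi]
    exact List.isChain_iff_getElem.1 hchain i hi
  · rw [hget _ (by lia), hget 0 (by lia)]
    apply hclose
    · simp [List.getLast?_eq_getElem?]
    · simp [List.head?_eq_getElem?]

lemma Walk.IsCycle.exists_isCyclicSeq {v : V} {w : G.Walk v v} (hw : w.IsCycle) :
    ∃ c, G.IsCyclicSeq w.length c := by
  have h3 := hw.three_le_length
  refine ⟨_, IsCyclicSeq.of_injOn (f := w.getVert) h3 ?_ ?_ ?_⟩
  · intro i hi j hj hij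
    simp only [Set.mem_Iio] at hi hj
    exact hw.getVert_injOn' (by simp; lia) (by simp; lia) hij
  · intro i hi
    exact w.adj_getVert_succ (by lia)
  · have := w.adj_getVert_succ (i := w.length - 1) (by lia)
    rw [Nat.sub_add_cancel (by lia)] at this
    simpa using this

namespace IsCyclicSeq

variable {m : ℕ} {c : ℕ → V}

lemma mod_eq (hc : G.IsCyclicSeq m c) {i j : ℕ} (h : c i = c j) : i % m = j % m := by
  have hm : 0 < m := by have := hc.three_le; lia
  rw [← hc.periodic.map_mod_nat i, ← hc.periodic.map_mod_nat j] at h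
  exact hc.injOn (Nat.mod_lt _ hm) (Nat.mod_lt _ hm) h

lemma eq_of_lt_add (hc : G.IsCyclicSeq m c) {i j : ℕ} (h : c i = c j) (hij : i < j + m)
    (hji : j < i + m) : i = j := by
  have h1 : i ≡ j [MOD m] := hc.mod_eq h
  exact h1.eq_of_abs_lt (by rw [abs_lt]; constructor <;> lia)

lemma le_card [Fintype V] (hc : G.IsCyclicSeq m c) : m ≤ Fintype.card V := by
  classical
  have : #((range m).image c) = m := by
    rw [card_image_of_injOn (by simpa [Set.InjOn] using hc.injOn), card_range]
  rw [← this]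
  exact card_le_univ _

lemma isHamiltonian [Fintype V] [DecidableEq V] (hc : G.IsCyclicSeq (Fintype.card V) c) :
    G.IsHamiltonian := by
  intro _
  have h3 := hc.three_le
  obtain ⟨v, w, hw, hlen⟩ :=
      (cycleGraph_isContained_iff (G := G) (n := Fintype.card V) (by lia)).1 <| by
    refine ⟨⟨⟨fun i ↦ c i, ?_⟩, ?_⟩⟩
    · intro a b hab
      have key (a b : Fin (Fintype.card V)) (h : (a - b).val = 1) : G.Adj (c a) (c b) := by
        have h2 : a.val % Fintype.card V = (b.val + 1) % Fintype.card V := by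
          have hb := b.2
          have ha := a.2
          rw [Fin.sub_def] at h
          simp only at h
          rcases Nat.lt_or_ge a.val b.val with hlt | hge
          · rw [Nat.mod_eq_of_lt (by lia)] at h
            rw [show b.val + 1 = a + Fintype.card V by lia]
            simp
          · rw [show Fintype.card V - b.val + a.val = (a.val - b.val) + Fintype.card V by lia,
              Nat.add_mod_right, Nat.mod_eq_of_lt (by lia)] at h
            rw [show b.val + 1 = a by lia]
        rw [← hc.periodic.map_mod_nat a, h2, hc.periodic.map_mod_nat]
        exact (hc.adj _).symm
      rcases cycleGraph_adj'.1 hab with h | h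
      · exact key _ _ h
      · exact (key _ _ h).symm
    · intro a b hab
      exact Fin.ext (hc.injOn a.2 b.2 hab)
  exact ⟨v, w, Walk.isHamiltonianCycle_iff_isCycle_and_length_eq.2 ⟨hw, hlen⟩⟩

lemma isChain_map_range' (hc : G.IsCyclicSeq m c) (i n : ℕ) :
    ((List.range' i n).map c).IsChain G.Adj := by
  rw [List.isChain_map]
  exact (List.isChain_range' i n 1).imp fun a b (h : b = a + 1) ↦ h ▸ hc.adj a

lemma nodup_map_range' (hc : G.IsCyclicSeq m c) (i : ℕ) {n : ℕ} (hn : n ≤ m) :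
    ((List.range' i n).map c).Nodup := by
  refine List.Nodup.map_on (fun a ha b hb hab ↦ ?_) List.nodup_range'
  rw [List.mem_range'_1] at ha hb
  exact hc.eq_of_lt_add hab (by lia) (by lia)

end IsCyclicSeq

lemma head?_map_range' (c : ℕ → V) (i : ℕ) {n : ℕ} (hn : 0 < n) :
    ((List.range' i n).map c).head? = some (c i) := by
  obtain ⟨n, rfl⟩ := Nat.exists_eq_succ_of_ne_zero hn.ne'
  simp [List.range'_succ]

lemma getLast?_map_range' (c : ℕ → V) (i : ℕ) {n : ℕ} (hn : 0 < n) :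
    ((List.range' i n).map c).getLast? = some (c (i + n - 1)) := by
  obtain ⟨n, rfl⟩ := Nat.exists_eq_succ_of_ne_zero hn.ne'
  rw [List.range'_1_concat]
  simp

lemma Walk.head?_support {u v : V} (p : G.Walk u v) : p.support.head? = some u := by
  cases p <;> simp

lemma Walk.getLast?_support {u v : V} (p : G.Walk u v) : p.support.getLast? = some v := by
  rw [List.getLast?_eq_some_getLast p.support_ne_nil, p.getLast_support]

namespace IsCyclicSeq

variable {m : ℕ} {c : ℕ → V}

/-- Replacing an edge of a cycle by a detour outside the cycle gives a longer cycle. -/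
lemma exists_detour (hc : G.IsCyclicSeq m c) {u v : V} {p : G.Walk u v} (hp : p.IsPath)
    (hdisj : ∀ j, c j ∉ p.support) {i : ℕ} (hu : G.Adj (c i) u) (hv : G.Adj (c (i + 1)) v) :
    ∃ n c', m < n ∧ G.IsCyclicSeq n c' := by
  have h3 := hc.three_le
  set l := (List.range' (i + 1) m).map c ++ p.support with hl
  have hlen : l.length = m + (p.length + 1) := by simp [hl]
  have hnd : l.Nodup := by
    refine List.Nodup.append (hc.nodup_map_range' _ le_rfl) hp.support_nodup fun x hx hx' ↦ ?_
    obtain ⟨j, -, rfl⟩ := List.mem_map.1 hx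
    exact hdisj j hx'
  have hchain : l.IsChain G.Adj := by
    refine List.isChain_append.2 ⟨hc.isChain_map_range' _ _, p.isChain_adj_support, ?_⟩
    rw [getLast?_map_range' c _ (by lia), p.head?_support,
      show i + 1 + m - 1 = i + m by lia, hc.periodic]
    simpa using hu
  have hclose : ∀ x ∈ l.getLast?, ∀ y ∈ l.head?, G.Adj x y := by
    rw [hl, List.getLast?_append, List.head?_append, p.getLast?_support,
      head?_map_range' c _ (by lia)]
    simpa using hv.symm
  obtain ⟨c', hc'⟩ := exists_isCyclicSeq_of_list (by lia) hnd hchain hclose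
  exact ⟨_, c', by lia, hc'⟩

/-- Exchanging two edges of a cycle for a chord and a path outside the cycle gives a longer
cycle. -/
lemma exists_crossing (hc : G.IsCyclicSeq m c) {u v : V} {p : G.Walk u v} (hp : p.IsPath)
    (hdisj : ∀ j, c j ∉ p.support) {i j : ℕ} (hij : i < j) (hji : j < i + m)
    (hu : G.Adj (c j) u) (hv : G.Adj (c i) v) (hchord : G.Adj (c (i + 1)) (c (j + 1))) :
    ∃ n c', m < n ∧ G.IsCyclicSeq n c' := by
  have h3 := hc.three_le
  set l := (List.range' (i + 1) (j - i)).map c ++ (p.support ++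
    ((List.range' (j + 1) (i + m - j)).map c).reverse) with hl
  have hlen : l.length = m + (p.length + 1) := by simp [hl]; lia
  have hnd : l.Nodup := by
    refine List.Nodup.append (hc.nodup_map_range' _ (by lia)) (List.Nodup.append hp.support_nodup
      (List.nodup_reverse.2 (hc.nodup_map_range' _ (by lia))) fun x hx hx' ↦ ?_) fun x hx hx' ↦ ?_
    · obtain ⟨a, -, rfl⟩ := List.mem_map.1 (List.mem_reverse.1 hx')
      exact hdisj a hx
    · obtain ⟨a, ha, rfl⟩ := List.mem_map.1 hx
      rcases List.mem_append.1 hx' with h | h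
      · exact hdisj a h
      · obtain ⟨b, hb, hab⟩ := List.mem_map.1 (List.mem_reverse.1 h)
        rw [List.mem_range'_1] at ha hb
        have := hc.eq_of_lt_add hab (by lia) (by lia)
        lia
  have hchain : l.IsChain G.Adj := by
    refine List.isChain_append.2 ⟨hc.isChain_map_range' _ _, List.isChain_append.2
      ⟨p.isChain_adj_support, ?_, ?_⟩, ?_⟩
    · exact List.isChain_reverse.2 ((hc.isChain_map_range' _ _).imp fun _ _ h ↦ h.symm)
    · rw [p.getLast?_support, List.head?_reverse, getLast?_map_range' c _ (by lia),
        show j + 1 + (i + m - j) - 1 = i + m by lia, hc.periodic]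
      simpa using hv.symm
    · rw [getLast?_map_range' c _ (by lia), List.head?_append, p.head?_support,
        show i + 1 + (j - i) - 1 = j by lia]
      simpa using hu
  have hclose : ∀ x ∈ l.getLast?, ∀ y ∈ l.head?, G.Adj x y := by
    rw [hl, List.getLast?_append, List.getLast?_append, List.head?_append, List.getLast?_reverse,
      head?_map_range' c _ (by lia), head?_map_range' c _ (by lia)]
    simpa using hchord.symm
  obtain ⟨c', hc'⟩ := exists_isCyclicSeq_of_list (by lia) hnd hchain hclose
  exact ⟨_, c', by lia, hc'⟩

end IsCyclicSeq

/-- The vertices reachable from `h` by walks avoiding the vertices of `c`. -/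
def offCycle (G : SimpleGraph V) (c : ℕ → V) (h : V) : Set V :=
  {v | ∃ w : G.Walk h v, ∀ j, c j ∉ w.support}

lemma offCycle.exists_isPath {c : ℕ → V} {h u v : V} (hu : u ∈ G.offCycle c h)
    (hv : v ∈ G.offCycle c h) : ∃ p : G.Walk u v, p.IsPath ∧ ∀ j, c j ∉ p.support := by
  classical
  obtain ⟨w, hw⟩ := hu
  obtain ⟨w', hw'⟩ := hv
  refine ⟨(w.reverse.append w').bypass, Walk.bypass_isPath _, fun j hj ↦ ?_⟩
  have := Walk.support_bypass_subset_support _ hj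
  rw [Walk.mem_support_append_iff, Walk.support_reverse, List.mem_reverse] at this
  exact this.elim (hw j) (hw' j)

lemma offCycle.step {c : ℕ → V} {h u v : V} (hu : u ∈ G.offCycle c h) (huv : G.Adj u v)
    (hv : ∀ j, c j ≠ v) : v ∈ G.offCycle c h := by
  obtain ⟨w, hw⟩ := hu
  refine ⟨w.concat huv, fun j hj ↦ ?_⟩
  rw [Walk.support_concat] at hj
  rcases List.mem_append.1 hj with h | h
  · exact hw j h
  · exact hv j (by simpa using h)

/-- A longest cycle missing some vertex in a `k`-connected graph yields an independent
set with more than `k` vertices. -/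
lemma IsCyclicSeq.exists_isIndepSet [Fintype V] {k m : ℕ} {c : ℕ → V} (hc : G.IsCyclicSeq m c)
    (hmax : ∀ n c', G.IsCyclicSeq n c' → n ≤ m)
    (hconn : ∀ S : Finset V, #S < k → (G.induce (↑S : Set V)ᶜ).Connected)
    (hm : m < Fintype.card V) : ∃ I : Finset V, #I = k + 1 ∧ G.IsIndepSet (I : Set V) := by
  classical
  have h3 := hc.three_le
  obtain ⟨h, hh⟩ : ∃ h, ∀ j, c j ≠ h := by
    by_contra! hcon
    have : (univ : Finset V) ⊆ (range m).image c := fun v _ ↦ by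
      obtain ⟨j, rfl⟩ := hcon v
      exact mem_image.2 ⟨j % m, mem_range.2 (Nat.mod_lt _ (by lia)), hc.periodic.map_mod_nat j⟩
    have := (card_le_card this).trans card_image_le
    simp at this
    lia
  have hself : h ∈ G.offCycle c h := ⟨.nil, by simpa using hh⟩
  have hoff {u} (hu : u ∈ G.offCycle c h) (j : ℕ) : c j ≠ u := by
    obtain ⟨w, hw⟩ := hu
    rintro rfl
    exact hw j w.end_mem_support
  set J : Finset ℕ := {i ∈ range m | ∃ u ∈ G.offCycle c h, G.Adj (c i) u} with hJ
  have hsucc {i u v} (hu : u ∈ G.offCycle c h) (hv : v ∈ G.offCycle c h)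
      (hiu : G.Adj (c i) u) : ¬ G.Adj (c (i + 1)) v := fun hiv ↦ by
    obtain ⟨p, hp, hdisj⟩ := offCycle.exists_isPath hu hv
    obtain ⟨n, c', hn, hc'⟩ := hc.exists_detour hp hdisj hiu hiv
    exact hn.not_ge (hmax n c' hc')
  have hcross {i j} (hi : i ∈ J) (hj : j ∈ J) (hij : i < j) :
      ¬ G.Adj (c (i + 1)) (c (j + 1)) := fun hadj ↦ by
    simp only [hJ, mem_filter, mem_range] at hi hj
    obtain ⟨him, v, hv, hiv⟩ := hi
    obtain ⟨hjm, u, hu, hju⟩ := hj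
    obtain ⟨p, hp, hdisj⟩ := offCycle.exists_isPath hu hv
    obtain ⟨n, c', hn, hc'⟩ := hc.exists_crossing hp hdisj hij (by lia) hju hiv hadj
    exact hn.not_ge (hmax n c' hc')
  have hmemJ {i u} (hu : u ∈ G.offCycle c h) (hiu : G.Adj (c i) u) : i % m ∈ J := by
    simp only [hJ, mem_filter, mem_range]
    exact ⟨Nat.mod_lt _ (by lia), u, hu, by rwa [hc.periodic.map_mod_nat]⟩
  have hcard : k ≤ #J := by
    by_contra! hlt
    have hS := hconn (J.image c) (card_image_le.trans_lt hlt)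
    have hstay {a b} (w : (G.induce (↑(J.image c) : Set V)ᶜ).Walk a b) :
        a.1 ∈ G.offCycle c h → b.1 ∈ G.offCycle c h := by
      induction w with
      | nil => exact id
      | @cons a b _ hab _ ih =>
        refine fun ha ↦ ih (offCycle.step ha hab fun j hj ↦ b.2 ?_)
        rw [mem_coe, mem_image]
        refine ⟨j % m, hmemJ ha ?_, by rw [hc.periodic.map_mod_nat, hj]⟩
        rw [hj]
        exact SimpleGraph.Adj.symm (induce_adj.1 hab)
    obtain ⟨z, hz⟩ : ∃ z, c z ∉ J.image c := by
      by_contra! hall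
      have hJall (z) : ∃ u ∈ G.offCycle c h, G.Adj (c z) u := by
        obtain ⟨i, hi, hiz⟩ := mem_image.1 (hall z)
        rw [← hiz]
        exact (mem_filter.1 hi).2
      obtain ⟨u, hu, hu'⟩ := hJall 0
      obtain ⟨v, hv, hv'⟩ := hJall 1
      exact hsucc hu hv hu' hv'
    have hhS : h ∉ J.image c := fun hmem ↦ by
      obtain ⟨i, -, hi⟩ := mem_image.1 hmem
      exact hh i hi
    obtain ⟨w⟩ := hS.preconnected ⟨h, by simpa using hhS⟩ ⟨c z, by simpa using hz⟩
    exact hoff (hstay w hself) z rfl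
  have hinj : Set.InjOn (fun i ↦ c (i + 1)) (J : Set ℕ) := fun i hi j hj hij ↦ by
    simp only [hJ, coe_filter, mem_range, Set.mem_ofPred_eq] at hi hj
    have := hc.eq_of_lt_add hij (by lia) (by lia)
    lia
  have hbig : #(insert h (J.image fun i ↦ c (i + 1))) = #J + 1 := by
    rw [card_insert_of_notMem, card_image_of_injOn hinj]
    intro hmem
    obtain ⟨i, -, hi⟩ := mem_image.1 hmem
    exact hh _ hi
  obtain ⟨I, hI, hIcard⟩ := exists_subset_card_eq ((Nat.succ_le_succ hcard).trans_eq hbig.symm)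
  refine ⟨I, hIcard, fun x hx y hy hxy hadj ↦ ?_⟩
  have hnot {i} (hi : i ∈ J) : ¬ G.Adj (c (i + 1)) h := by
    obtain ⟨-, u, hu, hiu⟩ := mem_filter.1 hi
    exact hsucc hu hself hiu
  rcases mem_insert.1 (hI hx) with rfl | hx <;> rcases mem_insert.1 (hI hy) with rfl | hy
  · exact hxy rfl
  · obtain ⟨i, hi, rfl⟩ := mem_image.1 hy
    exact hnot hi hadj.symm
  · obtain ⟨i, hi, rfl⟩ := mem_image.1 hx
    exact hnot hi hadj
  · obtain ⟨i, hi, rfl⟩ := mem_image.1 hx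
    obtain ⟨j, hj, rfl⟩ := mem_image.1 hy
    rcases lt_trichotomy i j with hij | rfl | hij
    · exact hcross hi hj hij hadj
    · exact hxy rfl
    · exact hcross hj hi hij hadj.symm

lemma le_degree_of_forall_connected [Fintype V] [DecidableRel G.Adj] {k : ℕ}
    (hcard : k < Fintype.card V)
    (hconn : ∀ S : Finset V, #S < k → (G.induce (↑S : Set V)ᶜ).Connected) (v : V) :
    k ≤ G.degree v := by
  classical
  by_contra! hlt
  have hS := hconn (G.neighborFinset v) (by simpa using hlt)
  obtain ⟨z, hz⟩ : ∃ z, z ∉ insert v (G.neighborFinset v) := by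
    by_contra! hall
    have h1 : Fintype.card V ≤ _ := card_le_card fun z (_ : z ∈ univ) ↦ hall z
    have h2 := card_insert_le v (G.neighborFinset v)
    rw [card_neighborFinset_eq_degree] at h2
    lia
  rw [mem_insert, not_or] at hz
  obtain ⟨w⟩ := hS.preconnected ⟨v, by simp⟩ ⟨z, by simpa using hz.2⟩
  cases w with
  | nil => exact hz.1 rfl
  | @cons _ b _ hab _ => exact b.2 (by simpa using induce_adj.1 hab)

lemma Connected.exists_isCyclicSeq [Fintype V] [Nontrivial V] [DecidableRel G.Adj]
    (hG : G.Connected) (hdeg : ∀ v, 2 ≤ G.degree v) : ∃ m c, G.IsCyclicSeq m c := by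
  have hac : ¬ G.IsAcyclic := fun hac ↦ by
    obtain ⟨v, hv⟩ := IsTree.exists_vert_degree_one_of_nontrivial (G := G) ⟨hG, hac⟩
    have := hdeg v
    lia
  simp only [IsAcyclic, not_forall, not_not] at hac
  obtain ⟨v, w, hw⟩ := hac
  exact ⟨_, hw.exists_isCyclicSeq⟩

/-- The Chvátal–Erdős theorem. -/
theorem isHamiltonian_or_exists_isIndepSet [Fintype V] [DecidableEq V] {k : ℕ} (hk : 2 ≤ k)
    (hcard : k < Fintype.card V)
    (hconn : ∀ S : Finset V, #S < k → (G.induce (↑S : Set V)ᶜ).Connected) :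
    G.IsHamiltonian ∨ ∃ I : Finset V, #I = k + 1 ∧ G.IsIndepSet (I : Set V) := by
  classical
  have : Nontrivial V := Fintype.one_lt_card_iff_nontrivial.1 (by lia)
  have hG : G.Connected := by
    have h := hconn ∅ (by simp; lia)
    rw [coe_empty, Set.compl_empty] at h
    exact (induceUnivIso G).connected_iff.1 h
  obtain ⟨m₀, hm₀⟩ := hG.exists_isCyclicSeq
    fun v ↦ hk.trans (le_degree_of_forall_connected hcard hconn v)
  have hbound : ∀ n, (∃ c, G.IsCyclicSeq n c) → n ≤ Fintype.card V := fun n ⟨_, hc⟩ ↦ hc.le_card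
  obtain ⟨c, hc⟩ := Nat.findGreatest_spec (P := fun n ↦ ∃ c, G.IsCyclicSeq n c)
    (hbound m₀ hm₀) hm₀
  rcases hc.le_card.lt_or_eq with hlt | heq
  · exact .inr <| hc.exists_isIndepSet
      (fun n c' hc' ↦ Nat.le_findGreatest (hbound n ⟨c', hc'⟩) ⟨c', hc'⟩) hconn hlt
  · exact .inl (heq ▸ hc : G.IsCyclicSeq (Fintype.card V) c).isHamiltonian

/-- Two disjoint families of `s ≥ 3` vertices in which vertices with distinct indices are joined
across span a cycle of length `2 * s`. -/
lemma exists_isCyclicSeq_of_crown {s : ℕ} (hs : 3 ≤ s) {a b : ℕ → V}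
    (ha : Set.InjOn a (Set.Iio s)) (hb : Set.InjOn b (Set.Iio s))
    (hab : ∀ i < s, ∀ j < s, a i ≠ b j) (hadj : ∀ i < s, ∀ j < s, i ≠ j → G.Adj (a i) (b j)) :
    ∃ c, G.IsCyclicSeq (2 * s) c := by
  have hmod (i : ℕ) : (i + 2) % s < s := Nat.mod_lt _ (by lia)
  have hmodeq (i : ℕ) (hi : i < s) :
      (i + 2) % s = i + 2 ∧ i + 2 < s ∨ (i + 2) % s = i + 2 - s ∧ s ≤ i + 2 := by
    rcases Nat.lt_or_ge (i + 2) s with h | h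
    · exact .inl ⟨Nat.mod_eq_of_lt h, h⟩
    · exact .inr ⟨by rw [Nat.mod_eq_sub_mod h, Nat.mod_eq_of_lt (by lia)], h⟩
  refine ⟨_, IsCyclicSeq.of_injOn
    (f := fun t ↦ if t % 2 = 0 then a (t / 2) else b ((t / 2 + 2) % s)) (by lia) ?_ ?_ ?_⟩
  · intro i hi j hj hij
    simp only [Set.mem_Iio] at hi hj
    dsimp only at hij
    split_ifs at hij with h1 h2 h2
    · have := ha (show i / 2 < s by lia) (show j / 2 < s by lia) hij
      lia
    · exact (hab _ (by lia) _ (hmod _) hij).elim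
    · exact (hab _ (by lia) _ (hmod _) hij.symm).elim
    · have := hb (hmod _) (hmod _) hij
      have := hmodeq (i / 2) (by lia)
      have := hmodeq (j / 2) (by lia)
      lia
  · intro i hi
    have := hmodeq (i / 2) (by lia)
    split_ifs with h1 h2 h2
    · lia
    · rw [show (i + 1) / 2 = i / 2 by lia]
      exact hadj _ (by lia) _ (hmod _) (by lia)
    · exact (hadj _ (by lia) _ (hmod _) (by lia)).symm
    · lia
  · have := hmodeq ((2 * s - 1) / 2) (by lia)
    rw [if_neg (by lia), if_pos (by lia)]
    exact (hadj _ (by lia) _ (hmod _) (by lia)).symm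

lemma isHamiltonian_of_card_sdiff_neighborFinset_le_one [Fintype V] [DecidableEq V]
    [DecidableRel G.Adj] {I : Finset V} (hI : 3 ≤ #I) (hcard : #Iᶜ = #I)
    (h₁ : ∀ v ∈ I, #(Iᶜ \ G.neighborFinset v) ≤ 1)
    (h₂ : ∀ v ∈ Iᶜ, #(I \ G.neighborFinset v) ≤ 1) : G.IsHamiltonian := by
  set s := #I with hs
  let a : Fin s ≃ I := I.equivFin.symm
  have hex (i : Fin s) : ∃ u, (∃ x ∈ Iᶜ, ¬ G.Adj (a i) x) → u ∈ Iᶜ ∧ ¬ G.Adj (a i) u := by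
    by_cases h : ∃ x ∈ Iᶜ, ¬ G.Adj (a i) x
    · obtain ⟨x, hx⟩ := h
      exact ⟨x, fun _ ↦ hx⟩
    · exact ⟨a i, fun h' ↦ (h h').elim⟩
  choose f hf using hex
  obtain ⟨b, hb⟩ := Finset.exists_equiv_extend_of_card_eq (α := Fin s) (t := Iᶜ)
    (s := {i | ∃ x ∈ Iᶜ, ¬ G.Adj (a i) x}) (f := f) (by simp [hcard])
    (fun x hx ↦ by
      obtain ⟨i, hi, rfl⟩ := mem_image.1 hx
      exact (hf i (mem_filter.1 hi).2).1)
    (fun i hi j hj hij ↦ by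
      have hi' := hf i (by simpa using hi)
      have hj' := hf j (by simpa using hj)
      have := card_le_one.1 (h₂ _ hi'.1) (a i) (by simpa [G.adj_comm] using hi'.2)
        (a j) (by rw [hij]; simpa [G.adj_comm] using hj'.2)
      exact a.injective (Subtype.ext this))
  have hadj (i j : Fin s) (hij : i ≠ j) : G.Adj (a i) (b j) := by
    by_contra hnot
    have hmem : ∃ x ∈ Iᶜ, ¬ G.Adj (a i) x := ⟨b j, (b j).2, hnot⟩
    have hfi := hf i hmem
    have := card_le_one.1 (h₁ _ (a i).2) (b j) (by simpa using hnot) (f i)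
      (by simpa using ⟨mem_compl.1 hfi.1, hfi.2⟩)
    rw [← hb i (by simpa using hmem)] at this
    exact hij (b.injective (Subtype.ext this)).symm
  have hpos : 0 < s := by lia
  let r (i : ℕ) : Fin s := ⟨i % s, Nat.mod_lt _ hpos⟩
  have hr {i j} (hi : i < s) (hj : j < s) (h : r i = r j) : i = j := by
    simpa [r, Nat.mod_eq_of_lt hi, Nat.mod_eq_of_lt hj] using h
  obtain ⟨c, hc⟩ := exists_isCyclicSeq_of_crown (G := G) (s := s) (a := fun i ↦ a (r i))
    (b := fun i ↦ b (r i)) hI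
    (fun i hi j hj hij ↦ hr hi hj (a.injective (Subtype.ext hij)))
    (fun i hi j hj hij ↦ hr hi hj (b.injective (Subtype.ext hij)))
    (fun i _ j _ hij ↦ mem_compl.1 (b (r j)).2 (hij ▸ (a (r i)).2))
    (fun i hi j hj hij ↦ hadj _ _ fun h ↦ hij (hr hi hj h))
  have : 2 * s = Fintype.card V := by
    have := card_add_card_compl I
    lia
  exact (this ▸ hc : G.IsCyclicSeq (Fintype.card V) c).isHamiltonian

lemma IsIndepSet.neighborFinset_subset_compl [Fintype V] [DecidableEq V] [DecidableRel G.Adj]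
    {I : Finset V} (hI : G.IsIndepSet (I : Set V)) {v : V} (hv : v ∈ I) :
    G.neighborFinset v ⊆ Iᶜ := fun u hu ↦ by
  rw [mem_compl]
  rw [mem_neighborFinset] at hu
  exact fun huI ↦ hI hv huI hu.ne hu

lemma IsIndepSet.sum_degree_eq [Fintype V] [DecidableEq V] [DecidableRel G.Adj]
    {I : Finset V} (hI : G.IsIndepSet (I : Set V)) :
    ∑ v ∈ I, G.degree v = ∑ u ∈ Iᶜ, #(G.neighborFinset u ∩ I) := by
  have := sum_card_bipartiteAbove_eq_sum_card_bipartiteBelow (s := I) (t := Iᶜ) G.Adj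
  refine (sum_congr rfl fun v hv ↦ ?_).trans (this.trans (sum_congr rfl fun u _ ↦ ?_))
  · rw [← card_neighborFinset_eq_degree]
    congr 1
    ext u
    have := @IsIndepSet.neighborFinset_subset_compl _ _ _ _ _ _ hI v hv u
    simp only [mem_bipartiteAbove, mem_neighborFinset] at this ⊢
    tauto
  · congr 1
    ext v
    simp [mem_bipartiteBelow, G.adj_comm, and_comm]

end SimpleGraph

/-- The two slack terms `s * (δ² - (e / s)²)` and `m * ((e / m)² - Δ²)` are nonpositive, so they
vanish when the degree bound holds. -/
lemma eq_of_forgotten_bound {F s m e δ Δ : ℝ} (hs : 0 < s) (hm : 0 < m) (hδ : 0 < δ)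
    (hF : (s + m) * δ ^ 3 ≤ F) (hes : s * δ ≤ e) (hem : e ≤ m * Δ)
    (h : F ≤ m * δ ^ 3 + δ / s *
      (2 * s * (s * δ ^ 2 + e ^ 2 / m) - e ^ 2 - 2 * s * m * Δ ^ 2)) :
    e = s * δ ∧ e = m * Δ ∧ F = (s + m) * δ ^ 3 := by
  obtain ⟨p, rfl⟩ : ∃ p, e = s * p := ⟨e / s, by field_simp⟩
  obtain ⟨q, hq⟩ : ∃ q, s * p = m * q := ⟨s * p / m, by field_simp⟩
  have hp : δ ≤ p := le_of_mul_le_mul_left hes hs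
  have hqΔ : q ≤ Δ := le_of_mul_le_mul_left (hq ▸ hem) hm
  have hq0 : 0 < q := pos_of_mul_pos_right (hq ▸ mul_pos hs (hδ.trans_le hp)) hm.le
  have hrhs : m * δ ^ 3 + δ / s *
      (2 * s * (s * δ ^ 2 + (s * p) ^ 2 / m) - (s * p) ^ 2 - 2 * s * m * Δ ^ 2)
      = (s + m) * δ ^ 3 - δ * (s * (p ^ 2 - δ ^ 2) + 2 * m * (Δ ^ 2 - q ^ 2)) := by
    have h1 : (s * p) ^ 2 / m = m * q ^ 2 := by rw [hq]; field_simp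
    rw [h1]
    field_simp
    ring
  rw [hrhs] at h
  have h1 : 0 ≤ s * (p ^ 2 - δ ^ 2) := by
    have := pow_le_pow_left₀ hδ.le hp 2
    exact mul_nonneg hs.le (by linarith)
  have h2 : 0 ≤ m * (Δ ^ 2 - q ^ 2) := by
    have := pow_le_pow_left₀ hq0.le hqΔ 2
    exact mul_nonneg hm.le (by linarith)
  have h3 : s * (p ^ 2 - δ ^ 2) + 2 * m * (Δ ^ 2 - q ^ 2) ≤ 0 :=
    nonpos_of_mul_nonpos_right (by linarith) hδ
  have h4 : p ^ 2 - δ ^ 2 = 0 :=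
    (mul_eq_zero.1 (by linarith : s * (p ^ 2 - δ ^ 2) = 0)).resolve_left hs.ne'
  have h5 : Δ ^ 2 - q ^ 2 = 0 :=
    (mul_eq_zero.1 (by linarith : m * (Δ ^ 2 - q ^ 2) = 0)).resolve_left hm.ne'
  refine ⟨?_, ?_, ?_⟩
  · rw [(pow_left_inj₀ (by linarith) hδ.le two_ne_zero).1 (by linarith : p ^ 2 = δ ^ 2)]
  · rw [hq, (pow_left_inj₀ hq0.le (by linarith) two_ne_zero).1 (by linarith : q ^ 2 = Δ ^ 2)]
  · rw [h4, mul_assoc, h5] at h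
    linarith

/-- If `G` is a `k`-connected (`k ≥ 2`) graph with `n ≥ 3` vertices, `e` edges, minimum degree
`δ`, and maximum degree `Δ`, and
`F(G) ≤ (n − k − 1)δ³ + (δ/(k+1))(2(k+1)((k+1)δ² + e²/(n − k − 1)) − e² − 2(k+1)(n − k − 1)Δ²)`,
then `G` is Hamiltonian. -/
theorem stmt8 {V : Type*} [Fintype V] [DecidableEq V] (G : SimpleGraph V) [DecidableRel G.Adj]
    (k : ℕ) (hk : 2 ≤ k) (hconn : IsKConnected G k) (hn : 3 ≤ Fintype.card V)
    (h : forgottenIndex G ≤ ((Fintype.card V : ℝ) - k - 1) * (G.minDegree : ℝ) ^ 3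
        + ((G.minDegree : ℝ) / ((k : ℝ) + 1)) *
          (2 * ((k : ℝ) + 1) * (((k : ℝ) + 1) * (G.minDegree : ℝ) ^ 2
              + (G.edgeFinset.card : ℝ) ^ 2 / ((Fintype.card V : ℝ) - k - 1))
            - (G.edgeFinset.card : ℝ) ^ 2
            - 2 * ((k : ℝ) + 1) * ((Fintype.card V : ℝ) - k - 1) * (G.maxDegree : ℝ) ^ 2)) :
    G.IsHamiltonian := by
  rcases SimpleGraph.isHamiltonian_or_exists_isIndepSet hk hconn.1 hconn.2
    with hham | ⟨I, hI, hind⟩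
  · exact hham
  have hdeg := SimpleGraph.le_degree_of_forall_connected hconn.1 hconn.2
  have : Nonempty V := Fintype.card_pos_iff.1 (by lia)
  have hδk : k ≤ G.minDegree := G.le_minDegree_of_forall_le_degree k hdeg
  have hcard : k + 1 + #Iᶜ = Fintype.card V := hI ▸ card_add_card_compl I
  have hmpos : 0 < #Iᶜ := by
    obtain ⟨v, hv⟩ := card_pos.1 (by lia : 0 < #I)
    have := card_le_card (hind.neighborFinset_subset_compl hv)
    rw [G.card_neighborFinset_eq_degree] at this
    have := hdeg v
    lia
  have hdouble := hind.sum_degree_eq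
  have hle (u : V) : #(G.neighborFinset u ∩ I) ≤ G.degree u := by
    rw [← G.card_neighborFinset_eq_degree]
    exact card_le_card inter_subset_left
  have hab : ∑ v ∈ I, G.degree v ≤ ∑ u ∈ Iᶜ, G.degree u :=
    hdouble.trans_le (sum_le_sum fun u _ ↦ hle u)
  have hsum : ∑ v ∈ I, G.degree v + ∑ u ∈ Iᶜ, G.degree u = 2 * #G.edgeFinset := by
    rw [sum_add_sum_compl, G.sum_degrees_eq_twice_card_edges]
  have hlow : (k + 1) * G.minDegree ≤ ∑ v ∈ I, G.degree v := by
    rw [← hI]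
    exact card_nsmul_le_sum _ _ _ fun v _ ↦ G.minDegree_le_degree v
  have hhigh : ∑ u ∈ Iᶜ, G.degree u ≤ #Iᶜ * G.maxDegree :=
    sum_le_card_nsmul _ _ _ fun v _ ↦ G.degree_le_maxDegree v
  have hcube (u : V) : (G.minDegree : ℝ) ^ 3 ≤ (G.degree u : ℝ) ^ 3 := by
    gcongr
    exact G.minDegree_le_degree u
  have hcardR : ((k : ℝ) + 1) + #Iᶜ = Fintype.card V := by exact_mod_cast hcard
  have hconst : ∑ _u : V, (G.minDegree : ℝ) ^ 3 =
      (((k : ℝ) + 1) + #Iᶜ) * (G.minDegree : ℝ) ^ 3 := by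
    rw [hcardR, sum_const, card_univ, nsmul_eq_mul]
  rw [show (Fintype.card V : ℝ) - k - 1 = #Iᶜ by linarith] at h
  obtain ⟨hes, hem, hF⟩ := eq_of_forgotten_bound (by positivity) (by exact_mod_cast hmpos)
    (by exact_mod_cast (by lia : 0 < G.minDegree))
    (hconst ▸ sum_le_sum fun u _ ↦ hcube u) (by exact_mod_cast (by lia))
    (by exact_mod_cast (by lia)) h
  have hreg (u : V) : G.degree u = G.minDegree := by
    have := (sum_eq_sum_iff_of_le fun u _ ↦ hcube u).1 (hconst.trans hF.symm) u (mem_univ u)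
    exact_mod_cast ((pow_left_inj₀ (by positivity) (by positivity) three_ne_zero).1 this).symm
  have hΔ : G.maxDegree = G.minDegree := by
    obtain ⟨v, hv⟩ := G.exists_maximal_degree_vertex
    rw [hv, hreg]
  have hes' : #G.edgeFinset = (k + 1) * G.minDegree := by exact_mod_cast hes
  have hem' : #G.edgeFinset = #Iᶜ * G.minDegree := by
    rw [← hΔ]
    exact_mod_cast hem
  have hbal : #Iᶜ = k + 1 :=
    Nat.eq_of_mul_eq_mul_right (by lia : 0 < G.minDegree) (hem'.symm.trans hes')
  have hinter : ∀ u ∈ Iᶜ, #(G.neighborFinset u ∩ I) = G.degree u :=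
    (sum_eq_sum_iff_of_le fun u _ ↦ hle u).1 (by lia)
  refine SimpleGraph.isHamiltonian_of_card_sdiff_neighborFinset_le_one (I := I) (by lia) (by lia)
    (fun v hv ↦ ?_) (fun u hu ↦ ?_)
  · rw [card_sdiff_of_subset (hind.neighborFinset_subset_compl hv),
      G.card_neighborFinset_eq_degree]
    have := hdeg v
    lia
  · rw [card_sdiff, hinter u hu]
    have := hdeg u
    lia
end
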